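/- Let n ≥ 1, m ≥ 1 and s ∈ (0,1), and fix a continuous map g : 𝕊ⁿ → 𝕊^m. For t ∈ [s,1) define m_t := inf{ E_{t,n/s}(v) : v : 𝕊ⁿ → 𝕊^m continuous and homotopic to g } ∈ [0,∞], where E_{t,n/s}(v) := ∫_{𝕊ⁿ}∫_{𝕊ⁿ} |v(x)−v(y)|^{n/s}/|x−y|^{n+t·n/s} dμ(x) dμ(y). Then m_s = lim_{t→s⁺} m_t. -/

import Mathlib

open MeasureTheory
open scoped ENNReal Topology

noncomputable section

/-- The unit sphere `𝕊ᵏ ⊆ ℝ^{k+1}`. -/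
abbrev Sph (k : ℕ) : Type _ := ↥(Metric.sphere (0 : EuclideanSpace ℝ (Fin (k + 1))) 1)

/-- `f` and `g` are homotopic maps. -/
def Homotopic {X Y : Type*} [TopologicalSpace X] [TopologicalSpace Y] (f g : X → Y) : Prop :=
  ∃ H : unitInterval × X → Y, Continuous H ∧ (∀ x, H (0, x) = f x) ∧ (∀ x, H (1, x) = g x)

/-- The energy `E_{t,n/s}(v) = ∫∫ |v(x)-v(y)|^{n/s}/|x-y|^{n+t·n/s} dμ dμ` of a map
`𝕊ⁿ → 𝕊^m`, with `μ` the `n`-dimensional Hausdorff measure on `𝕊ⁿ`. -/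
def sphEnergy (n m : ℕ) (s t : ℝ) (v : Sph n → Sph m) : ℝ≥0∞ :=
  ∫⁻ x, ∫⁻ y,
    ENNReal.ofReal
      (‖(v x : EuclideanSpace ℝ (Fin (m + 1))) - (v y : EuclideanSpace ℝ (Fin (m + 1)))‖
          ^ ((n : ℝ) / s) / dist x y ^ ((n : ℝ) + t * ((n : ℝ) / s)))
    ∂(μH[(n : ℝ)] : Measure (Sph n)) ∂(μH[(n : ℝ)] : Measure (Sph n))

/-- The infimum `m_t` of `E_{t,n/s}` over continuous maps homotopic to `g`. -/
def minEnergy (n m : ℕ) (s : ℝ) (g : Sph n → Sph m) (t : ℝ) : ℝ≥0∞ :=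
  sInf {e : ℝ≥0∞ | ∃ v : Sph n → Sph m, Continuous v ∧ Homotopic v g ∧ e = sphEnergy n m s t v}

/-!
Lowering the exponent `b` of the kernel to `a` costs at most a factor `D ^ (b - a)`, where `1 ≤ D`
bounds the diameter, so `m_s ≤ liminf m_t`. The reverse inequality needs competitors whose energy
is finite for some `t > s`. Averaging `v` over rotations close to the identity, with a Lipschitz
density on the orthogonal group, gives a Lipschitz map uniformly close to `v`; by Jensen's
inequality and the rotation invariance of the energy, its energy is at most that of `v`. Projecting
it radially back to the sphere costs a factor arbitrarily close to `1` and does not leave the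
homotopy class. A Lipschitz map has finite energy for every `t < 1`, and its energy converges as
`t → s⁺` by dominated convergence.
-/

open Filter Metric Set NormedSpace
open scoped NNReal

section GagliardoEnergy

variable {X Y : Type*} [PseudoMetricSpace X] [PseudoEMetricSpace Y] {p a b : ℝ} {u : X → Y}

theorem edist_rpow_div_eq_zero (hp : 0 < p) (hu : Continuous u) {x y : X} (h : edist x y = 0)
    (a : ℝ) : edist (u x) (u y) ^ p / edist x y ^ a = 0 := by
  have huxy : edist (u x) (u y) = 0 :=
    EMetric.inseparable_iff.1 ((EMetric.inseparable_iff.2 h).map hu)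
  rw [huxy, ENNReal.zero_rpow_of_pos hp, ENNReal.zero_div]

theorem edist_rpow_div_le_mul (hp : 0 < p) (hu : Continuous u) {D : ℝ≥0}
    (hD : ∀ x y : X, edist x y ≤ D) (hab : a ≤ b) (x y : X) :
    edist (u x) (u y) ^ p / edist x y ^ a ≤
      D ^ (b - a) * (edist (u x) (u y) ^ p / edist x y ^ b) := by
  rcases eq_or_ne (edist x y) 0 with h | h
  · simp only [edist_rpow_div_eq_zero hp hu h, zero_le]
  · have hsplit : edist x y ^ (-a) = edist x y ^ (b - a) * edist x y ^ (-b) := by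
      rw [← ENNReal.rpow_add _ _ h (edist_ne_top x y)]
      ring_nf
    rw [div_eq_mul_inv, div_eq_mul_inv, ← ENNReal.rpow_neg, ← ENNReal.rpow_neg, hsplit,
      mul_left_comm]
    have := sub_nonneg.2 hab
    gcongr
    exact hD x y

theorem exists_one_le_forall_edist_le [BoundedSpace X] :
    ∃ D : ℝ≥0, 1 ≤ D ∧ ∀ x y : X, edist x y ≤ D := by
  obtain ⟨C, hC⟩ := boundedSpace_iff_edist.1 ‹BoundedSpace X›
  exact ⟨max C 1, le_max_right C 1, fun x y => (hC x y).trans (by exact_mod_cast le_max_left C 1)⟩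

theorem continuous_ennreal_const_rpow {c : ℝ≥0∞} (hc : c ≠ 0) (hc_top : c ≠ ∞) :
    Continuous fun r : ℝ => c ^ r := by
  have hpos : 0 < c.toReal := ENNReal.toReal_pos hc hc_top
  rw [← ENNReal.ofReal_toReal hc_top]
  simp only [ENNReal.ofReal_rpow_of_pos hpos]
  exact ENNReal.continuous_ofReal.comp (Real.continuous_const_rpow hpos.ne')

variable [MeasurableSpace X] {μ : Measure X}

/-- The Gagliardo energy `∬ dist (u x) (u y) ^ p / dist x y ^ a`. The exponent `a` is the full
power of the kernel: on an `n`-dimensional space, the seminorm of `W^{t,p}` corresponds to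
`a = n + t * p`. For `0 < p` the integrand vanishes on the diagonal, since `0 / 0 = 0`. -/
def gagliardoEnergy (μ : Measure X) (p a : ℝ) (u : X → Y) : ℝ≥0∞ :=
  ∫⁻ z, edist (u z.1) (u z.2) ^ p / edist z.1 z.2 ^ a ∂μ.prod μ

theorem gagliardoEnergy_le_of_edist_le {Z : Type*} [PseudoEMetricSpace Z] {w : X → Z} {c : ℝ≥0}
    (hp : 0 ≤ p) (h : ∀ x y, edist (w x) (w y) ≤ c * edist (u x) (u y)) :
    gagliardoEnergy μ p a w ≤ c ^ p * gagliardoEnergy μ p a u := by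
  rw [gagliardoEnergy, gagliardoEnergy,
    ← lintegral_const_mul' _ _ (ENNReal.rpow_ne_top_of_nonneg hp ENNReal.coe_ne_top)]
  refine lintegral_mono fun z => ?_
  simp only [← mul_div_assoc, ← ENNReal.mul_rpow_of_nonneg _ _ hp]
  gcongr
  exact h z.1 z.2

theorem gagliardoEnergy_le_mul (hp : 0 < p) (hu : Continuous u) {D : ℝ≥0}
    (hD : ∀ x y : X, edist x y ≤ D) (hab : a ≤ b) :
    gagliardoEnergy μ p a u ≤ D ^ (b - a) * gagliardoEnergy μ p b u := by
  rw [gagliardoEnergy, gagliardoEnergy, ← lintegral_const_mul' _ _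
    (ENNReal.rpow_ne_top_of_nonneg (sub_nonneg.2 hab) ENNReal.coe_ne_top)]
  exact lintegral_mono fun z => edist_rpow_div_le_mul hp hu hD hab z.1 z.2

theorem iInf_gagliardoEnergy_le_liminf [BoundedSpace X] {𝓕 : Set (X → Y)} (hp : 0 < p)
    (h𝓕 : ∀ v ∈ 𝓕, Continuous v) (a : ℝ) :
    ⨅ v ∈ 𝓕, gagliardoEnergy μ p a v ≤
      liminf (fun c => ⨅ v ∈ 𝓕, gagliardoEnergy μ p c v) (𝓝[>] a) := by
  obtain ⟨D, hD1, hD⟩ := exists_one_le_forall_edist_le (X := X)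
  have hD0 : (D : ℝ≥0∞) ≠ 0 := by exact_mod_cast (zero_lt_one.trans_le hD1).ne'
  have hpow : Tendsto (fun c => (D : ℝ≥0∞) ^ (c - a)) (𝓝[>] a) (𝓝 1) := by
    have hcont : Continuous fun c => (D : ℝ≥0∞) ^ (c - a) :=
      (continuous_ennreal_const_rpow hD0 ENNReal.coe_ne_top).comp (by fun_prop)
    simpa using (hcont.tendsto a).mono_left nhdsWithin_le_nhds
  have hscale : Tendsto (fun c => (⨅ v ∈ 𝓕, gagliardoEnergy μ p a v) / (D : ℝ≥0∞) ^ (c - a))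
      (𝓝[>] a) (𝓝 (⨅ v ∈ 𝓕, gagliardoEnergy μ p a v)) := by
    simpa using ENNReal.Tendsto.div tendsto_const_nhds (Or.inr one_ne_zero) hpow
      (Or.inl ENNReal.one_ne_top)
  refine hscale.liminf_eq.ge.trans (liminf_le_liminf ?_)
  filter_upwards [self_mem_nhdsWithin] with c (hc : a < c)
  refine le_iInf₂ fun v hv => ENNReal.div_le_of_le_mul' ?_
  exact (iInf₂_le v hv).trans (gagliardoEnergy_le_mul hp (h𝓕 v hv) hD hc.le)

variable [OpensMeasurableSpace X] [SecondCountableTopology X]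

theorem measurable_edist_rpow_div (hu : Continuous u) (p a : ℝ) :
    Measurable fun z : X × X => edist (u z.1) (u z.2) ^ p / edist z.1 z.2 ^ a := by
  have hu2 : Measurable fun z : X × X => edist (u z.1) (u z.2) :=
    ((hu.comp continuous_fst).edist (hu.comp continuous_snd)).measurable
  exact (hu2.pow_const p).div (measurable_edist.pow_const a)

variable [BoundedSpace X]

theorem tendsto_gagliardoEnergy_nhdsGT (hp : 0 < p) (hu : Continuous u) (hab : a < b)
    (hfin : gagliardoEnergy μ p b u ≠ ∞) :
    Tendsto (fun c => gagliardoEnergy μ p c u) (𝓝[>] a) (𝓝 (gagliardoEnergy μ p a u)) := by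
  obtain ⟨D, hD1, hD⟩ := exists_one_le_forall_edist_le (X := X)
  have hD_top : (D : ℝ≥0∞) ^ (b - a) ≠ ∞ :=
    ENNReal.rpow_ne_top_of_nonneg (sub_nonneg.2 hab.le) ENNReal.coe_ne_top
  refine tendsto_lintegral_filter_of_dominated_convergence
    (fun z => D ^ (b - a) * (edist (u z.1) (u z.2) ^ p / edist z.1 z.2 ^ b))
    (.of_forall fun c => measurable_edist_rpow_div hu p c) ?_ ?_ (.of_forall fun z => ?_)
  · filter_upwards [Ioc_mem_nhdsGT hab] with c hc
    refine .of_forall fun z => (edist_rpow_div_le_mul hp hu hD hc.2 z.1 z.2).trans ?_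
    gcongr
    · exact_mod_cast hD1
    · exact hc.1.le
  · rw [lintegral_const_mul' _ _ hD_top]
    exact ENNReal.mul_ne_top hD_top hfin
  · rcases eq_or_ne (edist z.1 z.2) 0 with h | h
    · simp only [edist_rpow_div_eq_zero hp hu h, tendsto_const_nhds]
    · have hpow : Tendsto (fun c => edist z.1 z.2 ^ c) (𝓝[>] a) (𝓝 (edist z.1 z.2 ^ a)) :=
        ((continuous_ennreal_const_rpow h (edist_ne_top _ _)).tendsto a).mono_left
          nhdsWithin_le_nhds
      exact ENNReal.Tendsto.div tendsto_const_nhds (Or.inr (by simp [h, edist_ne_top])) hpow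
        (Or.inl (ENNReal.rpow_ne_top_of_ne_zero h (edist_ne_top _ _)))

theorem tendsto_iInf_gagliardoEnergy {𝓕 : Set (X → Y)} (hp : 0 < p)
    (h𝓕 : ∀ v ∈ 𝓕, Continuous v) (hab : a < b)
    (happrox : ∀ v ∈ 𝓕, ∀ κ : ℝ≥0, 1 < κ → ∃ w ∈ 𝓕,
      gagliardoEnergy μ p a w ≤ κ * gagliardoEnergy μ p a v ∧ gagliardoEnergy μ p b w ≠ ∞) :
    Tendsto (fun c => ⨅ v ∈ 𝓕, gagliardoEnergy μ p c v) (𝓝[>] a)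
      (𝓝 (⨅ v ∈ 𝓕, gagliardoEnergy μ p a v)) := by
  refine tendsto_of_le_liminf_of_limsup_le (iInf_gagliardoEnergy_le_liminf hp h𝓕 a)
    (le_iInf₂ fun v hv => ?_)
  have hlimsup : ∀ κ : ℝ≥0, 1 < κ →
      limsup (fun c => ⨅ v ∈ 𝓕, gagliardoEnergy μ p c v) (𝓝[>] a) ≤
        κ * gagliardoEnergy μ p a v := by
    intro κ hκ
    obtain ⟨w, hw, hle, hfin⟩ := happrox v hv κ hκ
    refine le_trans ?_ hle
    rw [← (tendsto_gagliardoEnergy_nhdsGT hp (h𝓕 w hw) hab hfin).limsup_eq]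
    exact limsup_le_limsup (.of_forall fun c => iInf₂_le w hw)
  have hcoe : Tendsto (fun κ : ℝ≥0 => (κ : ℝ≥0∞)) (𝓝[>] 1) (𝓝 1) :=
    (ENNReal.continuous_coe.tendsto 1).mono_left nhdsWithin_le_nhds
  have hscale := ENNReal.Tendsto.mul_const (b := gagliardoEnergy μ p a v) hcoe
    (Or.inl one_ne_zero)
  rw [one_mul] at hscale
  exact ge_of_tendsto hscale (eventually_mem_nhdsWithin.mono hlimsup)

end GagliardoEnergy

section AhlforsRegular

variable {X Y : Type*} [PseudoMetricSpace X] [PseudoEMetricSpace Y]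
  {a b d p : ℝ}

theorem setOf_lt_inv_dist_rpow_subset_closedBall (ha : 0 < a) (x : X) {t : ℝ} (ht : 0 < t) :
    {y | t < (dist x y ^ a)⁻¹} ⊆ closedBall x (t ^ (-a⁻¹)) := by
  intro y (hy : t < (dist x y ^ a)⁻¹)
  have hpow : 0 < dist x y ^ a := inv_pos.1 (ht.trans hy)
  rw [mem_closedBall, dist_comm, Real.rpow_neg ht.le, ← Real.inv_rpow ht.le]
  calc dist x y = (dist x y ^ a) ^ a⁻¹ := (Real.rpow_rpow_inv dist_nonneg ha.ne').symm
    _ ≤ t⁻¹ ^ a⁻¹ := by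
      have := (lt_inv_comm₀ ht hpow).1 hy
      gcongr

theorem edist_rpow_div_le_of_lipschitzWith {K : ℝ≥0} {u : X → Y} (hu : LipschitzWith K u)
    (hp : 0 < p) (b : ℝ) (x y : X) :
    edist (u x) (u y) ^ p / edist x y ^ b ≤ K ^ p * ENNReal.ofReal (dist x y ^ (b - p))⁻¹ := by
  rcases eq_or_ne (edist x y) 0 with h | h
  · simp only [edist_rpow_div_eq_zero hp hu.continuous h, zero_le]
  · have hpos : 0 < dist x y := by rwa [dist_edist, ENNReal.toReal_pos_iff, and_iff_left
      (edist_lt_top x y), pos_iff_ne_zero]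
    rw [← Real.rpow_neg hpos.le, neg_sub, ← ENNReal.ofReal_rpow_of_pos hpos, ← edist_dist,
      ENNReal.rpow_sub _ _ h (edist_ne_top x y), ← mul_div_assoc,
      ← ENNReal.mul_rpow_of_nonneg _ _ hp.le]
    gcongr
    exact hu x y

theorem lintegral_Ioi_one_ofReal_rpow (hb : 1 < b) :
    ∫⁻ t in Ioi (1 : ℝ), ENNReal.ofReal (t ^ (-b)) = ENNReal.ofReal (b - 1)⁻¹ := by
  rw [← ofReal_integral_eq_lintegral_ofReal (integrableOn_Ioi_rpow_of_lt (by linarith) one_pos)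
    (ae_restrict_of_forall_mem measurableSet_Ioi fun t ht =>
      Real.rpow_nonneg (zero_le_one.trans (le_of_lt ht)) _),
    integral_Ioi_rpow_of_lt (by linarith) one_pos, Real.one_rpow, neg_div, ← div_neg, one_div]
  congr 2
  ring

variable [MeasurableSpace X] [OpensMeasurableSpace X] {μ : Measure X} {C : ℝ≥0∞}

theorem lintegral_inv_dist_rpow_le (ha : 0 < a) (had : a < d) {x : X}
    (hμ : ∀ r : ℝ, 0 < r → r ≤ 1 → μ (closedBall x r) ≤ C * ENNReal.ofReal (r ^ d)) :
    ∫⁻ y, ENNReal.ofReal (dist x y ^ a)⁻¹ ∂μ ≤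
      μ univ + C * ENNReal.ofReal (d / a - 1)⁻¹ := by
  have hmeas : Measurable fun y => (dist x y ^ a)⁻¹ :=
    ((continuous_const.dist continuous_id).measurable.pow_const a).inv
  have hda : 1 < d / a := (one_lt_div ha).2 had
  rw [lintegral_eq_lintegral_meas_lt μ (.of_forall fun y => by positivity) hmeas.aemeasurable,
    ← Ioc_union_Ioi_eq_Ioi zero_le_one,
    lintegral_union measurableSet_Ioi (Ioc_disjoint_Ioi le_rfl)]
  gcongr
  · calc ∫⁻ t in Ioc (0 : ℝ) 1, μ {y | t < (dist x y ^ a)⁻¹}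
        ≤ ∫⁻ _ in Ioc (0 : ℝ) 1, μ univ := lintegral_mono fun t => measure_mono (subset_univ _)
      _ = μ univ := by simp
  · rw [← lintegral_Ioi_one_ofReal_rpow hda, ← lintegral_const_mul _ (by fun_prop)]
    refine setLIntegral_mono (by fun_prop) fun t (ht : 1 < t) => ?_
    have ht0 : 0 < t := zero_lt_one.trans ht
    refine (measure_mono (setOf_lt_inv_dist_rpow_subset_closedBall ha x ht0)).trans
      ((hμ _ (Real.rpow_pos_of_pos ht0 _) ?_).trans_eq ?_)
    · exact Real.rpow_le_one_of_one_le_of_nonpos ht.le (by simp [ha.le])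
    · rw [← Real.rpow_mul ht0.le, neg_mul, inv_mul_eq_div]

theorem gagliardoEnergy_ne_top_of_lipschitzWith [SecondCountableTopology X] [BoundedSpace X]
    [IsFiniteMeasure μ] {K : ℝ≥0} {u : X → Y} (hu : LipschitzWith K u) (hp : 0 < p) (hd : 0 < d)
    (hb : b < d + p) (hC : C ≠ ∞) (hμ : ∀ (x : X) (r : ℝ), 0 < r → r ≤ 1 →
      μ (closedBall x r) ≤ C * ENNReal.ofReal (r ^ d)) :
    gagliardoEnergy μ p b u ≠ ∞ := by
  obtain ⟨D, -, hD⟩ := exists_one_le_forall_edist_le (X := X)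
  obtain ⟨c, hc, hcd⟩ := exists_between (max_lt hb (lt_add_of_pos_left p hd))
  obtain ⟨hbc, hpc⟩ := max_lt_iff.1 hc
  refine ne_top_of_le_ne_top (ENNReal.mul_ne_top (ENNReal.rpow_ne_top_of_nonneg
    (sub_nonneg.2 hbc.le) ENNReal.coe_ne_top) ?_)
    (gagliardoEnergy_le_mul hp hu.continuous hD hbc.le)
  have hbound : gagliardoEnergy μ p c u ≤
      K ^ p * ((μ univ + C * ENNReal.ofReal (d / (c - p) - 1)⁻¹) * μ univ) := by
    calc gagliardoEnergy μ p c u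
        ≤ ∫⁻ z, K ^ p * ENNReal.ofReal (dist z.1 z.2 ^ (c - p))⁻¹ ∂μ.prod μ :=
          lintegral_mono fun z => edist_rpow_div_le_of_lipschitzWith hu hp c z.1 z.2
      _ = K ^ p * ∫⁻ x, ∫⁻ y, ENNReal.ofReal (dist x y ^ (c - p))⁻¹ ∂μ ∂μ := by
          have hmeas : Measurable fun z : X × X => ENNReal.ofReal (dist z.1 z.2 ^ (c - p))⁻¹ :=
            (measurable_dist.pow_const _).inv.ennreal_ofReal
          rw [lintegral_const_mul _ hmeas, lintegral_prod _ hmeas.aemeasurable]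
      _ ≤ K ^ p * ∫⁻ _, (μ univ + C * ENNReal.ofReal (d / (c - p) - 1)⁻¹) ∂μ := by
          gcongr with x
          exact lintegral_inv_dist_rpow_le (sub_pos.2 hpc) (sub_lt_iff_lt_add.2 hcd) (hμ x)
      _ = _ := by rw [lintegral_const]
  refine ne_top_of_le_ne_top ?_ hbound
  finiteness

end AhlforsRegular

section Averaging

theorem enorm_integral_rpow_le_lintegral {Ω V : Type*} [MeasurableSpace Ω] [NormedAddCommGroup V]
    [NormedSpace ℝ V] {P : Measure Ω} [IsProbabilityMeasure P] {f : Ω → V}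
    (hf : AEStronglyMeasurable f P) {p : ℝ} (hp : 1 ≤ p) :
    ‖∫ r, f r ∂P‖ₑ ^ p ≤ ∫⁻ r, ‖f r‖ₑ ^ p ∂P := by
  have hp0 : 0 < p := zero_lt_one.trans_le hp
  have hmono := eLpNorm'_le_eLpNorm'_of_exponent_le one_pos hp P hf
  simp only [eLpNorm', ENNReal.rpow_one, div_one] at hmono
  rw [← ENNReal.le_rpow_inv_iff hp0, ← one_div]
  exact (enorm_integral_le_lintegral_enorm f).trans hmono

theorem exists_lipschitzWith_lintegral_eq_one {X : Type*} [PseudoMetricSpace X]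
    [MeasurableSpace X] [OpensMeasurableSpace X] (μ : Measure X) [IsFiniteMeasure μ]
    [μ.IsOpenPosMeasure] {x₀ : X} {U : Set X} (hU : U ∈ 𝓝 x₀) :
    ∃ (f : X → ℝ≥0) (L : ℝ≥0), LipschitzWith L f ∧ Function.support f ⊆ U ∧
      ∫⁻ x, f x ∂μ = 1 := by
  obtain ⟨ε, hε, hεU⟩ := Metric.mem_nhds_iff.1 hU
  let f := thickenedIndicator hε {x₀}
  have hx₀ : f x₀ = 1 := thickenedIndicator_one hε _ (mem_singleton x₀)
  have hf_le : ∫⁻ x, f x ∂μ ≤ μ univ := by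
    rw [← lintegral_one]
    exact lintegral_mono fun x => ENNReal.coe_le_one_iff.2 (thickenedIndicator_le_one hε {x₀} x)
  have hf_pos : 0 < ∫⁻ x, f x ∂μ := by
    rw [lintegral_pos_iff_support (by fun_prop)]
    refine IsOpen.measure_pos μ ?_ ⟨x₀, by simp [hx₀]⟩
    exact isOpen_ne_fun (by fun_prop) continuous_const
  lift ∫⁻ x, f x ∂μ to ℝ≥0 using ne_top_of_le_ne_top (measure_ne_top μ univ) hf_le with Z hZ
  have hZ0 : Z ≠ 0 := by exact_mod_cast hf_pos.ne'
  refine ⟨fun x => Z⁻¹ * f x, Z⁻¹ * ε.toNNReal⁻¹, ?_, ?_, ?_⟩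
  · refine LipschitzWith.of_dist_le_mul fun x y => ?_
    have hdist := (lipschitzWith_thickenedIndicator hε {x₀}).dist_le_mul x y
    rw [NNReal.dist_eq] at hdist ⊢
    push_cast
    rw [← mul_sub, abs_mul, abs_of_nonneg (by positivity), mul_assoc]
    gcongr
    exact hdist
  · refine Function.support_subset_iff'.2 fun x hx => ?_
    have hx_far : x ∉ thickening ε {x₀} := by
      rw [thickening_singleton]
      exact fun h => hx (hεU h)
    rw [show f x = 0 from thickenedIndicator_zero hε _ hx_far, mul_zero]
  · simp only [ENNReal.coe_mul]
    rw [lintegral_const_mul _ (by fun_prop), ← hZ, ← ENNReal.coe_mul, inv_mul_cancel₀ hZ0,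
      ENNReal.coe_one]

theorem gagliardoEnergy_comp_smul {G X Y : Type*} [Group G] [PseudoMetricSpace X] [MulAction G X]
    [IsIsometricSMul G X] [PseudoEMetricSpace Y] [MeasurableSpace X] [BorelSpace X]
    [SecondCountableTopology X] {μ : Measure X} [SFinite μ] [SMulInvariantMeasure G X μ]
    {u : X → Y} (hu : Continuous u) (p a : ℝ) (g : G) :
    gagliardoEnergy μ p a (fun x => u (g • x)) = gagliardoEnergy μ p a u := by
  have hg : MeasurePreserving (fun x : X => g • x) μ μ := measurePreserving_smul g μ
  rw [gagliardoEnergy, gagliardoEnergy,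
    ← (hg.prod hg).lintegral_comp (measurable_edist_rpow_div hu p a)]
  simp only [Prod.map_fst, Prod.map_snd, edist_smul_left]

variable {G X V : Type*} [Group G] [MulAction G X] [NormedAddCommGroup V] {u : X → V}

variable [PseudoMetricSpace G] [PseudoMetricSpace X] [ContinuousSMul G X]

theorem setOf_forall_norm_inv_smul_sub_le_mem_nhds_one [ContinuousInv G] [CompactSpace X]
    (hu : Continuous u) {δ : ℝ} (hδ : 0 < δ) :
    {g : G | ∀ x, ‖u (g⁻¹ • x) - u x‖ ≤ δ} ∈ 𝓝 1 := by
  have hcont : Continuous fun z : G × X => ‖u (z.1⁻¹ • z.2) - u z.2‖ := by fun_prop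
  have hnear : ∀ x ∈ (univ : Set X), ∀ᶠ z : G × X in 𝓝 (1, x),
      ‖u (z.1⁻¹ • z.2) - u z.2‖ < δ := fun x _ =>
    hcont.continuousAt.eventually_lt continuousAt_const (by simpa using hδ)
  filter_upwards [isCompact_univ.eventually_forall_of_forall_eventually
    (P := fun g x => ‖u (g⁻¹ • x) - u x‖ < δ) hnear] with g hg x
  exact (hg x (mem_univ x)).le

variable [CompactSpace G] [MeasurableSpace G] [BorelSpace G] {P H : Measure G}

theorem integrable_inv_smul [ContinuousInv G] [IsFiniteMeasure P] (hu : Continuous u) (x : X) :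
    Integrable (fun g => u (g⁻¹ • x)) P :=
  Continuous.integrable_of_hasCompactSupport (by fun_prop) (.of_compactSpace _)

variable [NormedSpace ℝ V]

/-- The average of `u` over a group acting on its domain: the translates of `u` by `g` are
weighted by the measure `P`. -/
def orbitAverage (P : Measure G) (u : X → V) (x : X) : V :=
  ∫ g, u (g⁻¹ • x) ∂P

theorem norm_orbitAverage_sub_le [ContinuousInv G] [CompleteSpace V] [IsProbabilityMeasure P]
    (hu : Continuous u) {δ : ℝ} {x : X}
    (h : ∀ᵐ g ∂P, ‖u (g⁻¹ • x) - u x‖ ≤ δ) : ‖orbitAverage P u x - u x‖ ≤ δ := by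
  have hsub : orbitAverage P u x - u x = ∫ g, (u (g⁻¹ • x) - u x) ∂P := by
    rw [integral_sub (integrable_inv_smul hu x) (integrable_const _), integral_const,
      probReal_univ, one_smul, orbitAverage]
  rw [hsub]
  simpa using norm_integral_le_of_norm_le_const h

theorem norm_orbitAverage_smul_sub_le [IsTopologicalGroup G] [IsIsometricSMul Gᵐᵒᵖ G]
    [IsFiniteMeasure H] [H.IsMulLeftInvariant] (hu : Continuous u) {M : ℝ} (hM : ∀ x, ‖u x‖ ≤ M)
    {f : G → ℝ≥0} {L : ℝ≥0} (hf : LipschitzWith L f) (Q : G) (x : X) :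
    ‖orbitAverage (H.withDensity fun g => f g) u (Q • x) -
      orbitAverage (H.withDensity fun g => f g) u x‖ ≤ L * dist Q 1 * M * H.real univ := by
  have hdens : ∀ x, orbitAverage (H.withDensity fun g => f g) u x =
      ∫ g, f g • u (g⁻¹ • x) ∂H := fun x =>
    integral_withDensity_eq_integral_smul hf.continuous.measurable _
  have hshift : ∀ g : G, (Q * g)⁻¹ • Q • x = g⁻¹ • x := fun g => by
    rw [smul_smul, mul_inv_rev, inv_mul_cancel_right]
  have hfc : Continuous f := hf.continuous
  have hint : ∀ q : G, Integrable (fun g => f (q * g) • u (g⁻¹ • x)) H := fun q =>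
    Continuous.integrable_of_hasCompactSupport (by fun_prop) (.of_compactSpace _)
  rw [hdens, hdens, ← integral_mul_left_eq_self (fun g => f g • u (g⁻¹ • Q • x)) Q]
  simp only [hshift]
  rw [← integral_sub (hint Q) (by simpa only [one_mul] using hint 1)]
  refine norm_integral_le_of_norm_le_const (.of_forall fun g => ?_)
  have hfQ : |(f (Q * g) : ℝ) - f g| ≤ L * dist Q 1 := by
    rw [← NNReal.dist_eq, ← dist_mul_right Q 1 g, one_mul]
    exact hf.dist_le_mul (Q * g) g
  rw [NNReal.smul_def, NNReal.smul_def, ← sub_smul, norm_smul, Real.norm_eq_abs]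
  exact mul_le_mul hfQ (hM _) (norm_nonneg _) (by positivity)

variable [MeasurableSpace X] [BorelSpace X] [SecondCountableTopology X] {μ : Measure X} [SFinite μ]

theorem gagliardoEnergy_orbitAverage_le [IsTopologicalGroup G] [IsIsometricSMul G X]
    [SMulInvariantMeasure G X μ] [IsProbabilityMeasure P] (hu : Continuous u) {p : ℝ} (hp : 1 ≤ p)
    (a : ℝ) : gagliardoEnergy μ p a (orbitAverage P u) ≤ gagliardoEnergy μ p a u := by
  have hmeas : Measurable fun z : (X × X) × G =>
      edist (u (z.2⁻¹ • z.1.1)) (u (z.2⁻¹ • z.1.2)) ^ p / edist z.1.1 z.1.2 ^ a := by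
    have hnum : Continuous fun z : (X × X) × G =>
        edist (u (z.2⁻¹ • z.1.1)) (u (z.2⁻¹ • z.1.2)) := by fun_prop
    have hden : Continuous fun z : (X × X) × G => edist z.1.1 z.1.2 := by fun_prop
    exact (hnum.measurable.pow_const p).div (hden.measurable.pow_const a)
  calc gagliardoEnergy μ p a (orbitAverage P u)
      ≤ ∫⁻ z : X × X, ∫⁻ g,
          edist (u (g⁻¹ • z.1)) (u (g⁻¹ • z.2)) ^ p / edist z.1 z.2 ^ a ∂P ∂μ.prod μ := by
        refine lintegral_mono fun z => ?_
        have hnum : Continuous fun g : G => u (g⁻¹ • z.1) - u (g⁻¹ • z.2) := by fun_prop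
        simp only [div_eq_mul_inv, edist_eq_enorm_sub]
        rw [lintegral_mul_const _ (hnum.enorm.measurable.pow_const p), orbitAverage, orbitAverage,
          ← integral_sub (integrable_inv_smul hu _) (integrable_inv_smul hu _)]
        gcongr
        exact enorm_integral_rpow_le_lintegral hnum.aestronglyMeasurable hp
    _ = ∫⁻ g, gagliardoEnergy μ p a (fun x => u (g⁻¹ • x)) ∂P :=
        lintegral_lintegral_swap hmeas.aemeasurable
    _ = gagliardoEnergy μ p a u := by
        simp only [gagliardoEnergy_comp_smul hu, lintegral_const, measure_univ, mul_one]

theorem exists_lipschitzWith_approx (G : Type*) [Group G] [PseudoMetricSpace G]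
    [IsTopologicalGroup G] [CompactSpace G] [IsIsometricSMul Gᵐᵒᵖ G] [MulAction G X]
    [ContinuousSMul G X] [IsIsometricSMul G X] [SMulInvariantMeasure G X μ] [CompactSpace X]
    [CompleteSpace V] {C : ℝ≥0} (hG : ∀ x y : X, ∃ g : G, g • x = y ∧ dist g 1 ≤ C * dist x y)
    (hu : Continuous u) {δ : ℝ} (hδ : 0 < δ) :
    ∃ (w : X → V) (K : ℝ≥0), LipschitzWith K w ∧ (∀ x, ‖w x - u x‖ ≤ δ) ∧
      ∀ p a : ℝ, 1 ≤ p → gagliardoEnergy μ p a w ≤ gagliardoEnergy μ p a u := by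
  borelize G
  let H : Measure G := Measure.haar
  obtain ⟨f, L, hfL, hfsupp, hf1⟩ := exists_lipschitzWith_lintegral_eq_one H
    (setOf_forall_norm_inv_smul_sub_le_mem_nhds_one (G := G) hu hδ)
  obtain ⟨M, hM⟩ : ∃ M : ℝ≥0, ∀ x, ‖u x‖ ≤ M := by
    obtain ⟨M, hM⟩ := isCompact_univ.exists_bound_of_continuousOn hu.continuousOn
    exact ⟨M.toNNReal, fun x => (hM x (mem_univ x)).trans (Real.le_coe_toNNReal M)⟩
  let P : Measure G := H.withDensity fun g => f g
  have hP : IsProbabilityMeasure P := ⟨by simpa [P] using hf1⟩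
  refine ⟨orbitAverage P u, L * C * M * (H univ).toNNReal, ?_, fun x => ?_, fun p a hp =>
    gagliardoEnergy_orbitAverage_le hu hp a⟩
  · refine LipschitzWith.of_dist_le_mul fun x y => ?_
    obtain ⟨Q, rfl, hQ⟩ := hG x y
    have hrot := norm_orbitAverage_smul_sub_le (H := H) hu hM hfL Q x
    rw [dist_comm, dist_eq_norm]
    calc ‖orbitAverage P u (Q • x) - orbitAverage P u x‖
        ≤ L * dist Q 1 * M * H.real univ := hrot
      _ ≤ L * (C * dist x (Q • x)) * M * H.real univ := by gcongr
      _ = (L * C * M * (H univ).toNNReal : ℝ≥0) * dist x (Q • x) := by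
        simp only [NNReal.coe_mul, measureReal_def, ENNReal.coe_toNNReal_eq_toReal]
        ring
  · refine norm_orbitAverage_sub_le hu ?_
    rw [ae_withDensity_iff hfL.continuous.measurable.coe_nnreal_ennreal]
    refine .of_forall fun g hg => hfsupp (fun h => hg ?_) x
    simp [h]

end Averaging

section UnitSphere

variable {E : Type*} [NormedAddCommGroup E] [InnerProductSpace ℝ E]

theorem norm_normalize_sub_normalize_le {a b : E} {r : ℝ} (hr : 0 < r) (ha : r ≤ ‖a‖)
    (hb : r ≤ ‖b‖) : ‖normalize a - normalize b‖ ≤ r⁻¹ * ‖a - b‖ := by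
  have ha0 : 0 < ‖a‖ := hr.trans_le ha
  have hb0 : 0 < ‖b‖ := hr.trans_le hb
  have hid : ‖normalize a - normalize b‖ ^ 2 * (‖a‖ * ‖b‖) = ‖a - b‖ ^ 2 - (‖a‖ - ‖b‖) ^ 2 := by
    rw [norm_sub_sq_real, norm_sub_sq_real, NormedSpace.normalize, NormedSpace.normalize,
      norm_smul, norm_smul, real_inner_smul_left, real_inner_smul_right]
    simp only [norm_inv, norm_norm]
    field_simp
    ring
  rw [inv_mul_eq_div, le_div_iff₀' hr]
  refine le_of_sq_le_sq ?_ (norm_nonneg _)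
  calc (r * ‖normalize a - normalize b‖) ^ 2
      = ‖normalize a - normalize b‖ ^ 2 * (r * r) := by ring
    _ ≤ ‖normalize a - normalize b‖ ^ 2 * (‖a‖ * ‖b‖) := by gcongr
    _ ≤ ‖a - b‖ ^ 2 := by rw [hid]; exact sub_le_self _ (sq_nonneg _)

/-- The radial projection of a nonzero vector to the unit sphere. -/
def toUnitSphere (a : E) (ha : a ≠ 0) : sphere (0 : E) 1 :=
  ⟨normalize a, by simpa using ha⟩

theorem dist_toUnitSphere_le {a b : E} {r : ℝ} (hr : 0 < r) (ha : r ≤ ‖a‖) (hb : r ≤ ‖b‖)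
    (ha0 : a ≠ 0) (hb0 : b ≠ 0) :
    dist (toUnitSphere a ha0) (toUnitSphere b hb0) ≤ r⁻¹ * dist a b := by
  rw [Subtype.dist_eq, dist_eq_norm, dist_eq_norm]
  exact norm_normalize_sub_normalize_le hr ha hb

theorem toUnitSphere_smul {c : ℝ} (hc : 0 < c) (x : sphere (0 : E) 1) (h : c • (x : E) ≠ 0) :
    toUnitSphere (c • (x : E)) h = x :=
  Subtype.ext <| by
    simp only [toUnitSphere]
    rw [normalize_smul_of_pos hc, normalize_eq_self_of_norm_eq_one (by simp)]

theorem continuous_toUnitSphere {X : Type*} [TopologicalSpace X] {f : X → E} (hf : Continuous f)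
    (hf0 : ∀ x, f x ≠ 0) : Continuous fun x => toUnitSphere (f x) (hf0 x) :=
  ((hf.norm.inv₀ fun x => norm_ne_zero_iff.2 (hf0 x)).smul hf).subtype_mk _

theorem norm_reflection_singleton_sub_le {v w : E} (hv : ‖v‖ = 1) (hw : ‖w‖ = 1) (z : E) :
    ‖(ℝ ∙ v).reflection z - (ℝ ∙ w).reflection z‖ ≤ 4 * ‖v - w‖ * ‖z‖ := by
  have hsplit : (ℝ ∙ v).reflection z - (ℝ ∙ w).reflection z =
      2 • (inner ℝ (v - w) z • v + inner ℝ w z • (v - w)) := by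
    simp only [Submodule.reflection_singleton_apply, hv, hw, inner_sub_left]
    module
  rw [hsplit, ← Nat.cast_smul_eq_nsmul ℝ, norm_smul]
  have h1 : |inner ℝ (v - w) z| ≤ ‖v - w‖ * ‖z‖ := abs_real_inner_le_norm _ _
  have h2 : |inner ℝ w z| ≤ ‖w‖ * ‖z‖ := abs_real_inner_le_norm _ _
  calc ‖((2 : ℕ) : ℝ)‖ * ‖inner ℝ (v - w) z • v + inner ℝ w z • (v - w)‖
      ≤ 2 * (|inner ℝ (v - w) z| * ‖v‖ + |inner ℝ w z| * ‖v - w‖) := by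
        rw [Real.norm_natCast, Nat.cast_two, ← Real.norm_eq_abs, ← Real.norm_eq_abs, ← norm_smul,
          ← norm_smul]
        gcongr
        exact norm_add_le _ _
    _ ≤ 2 * (‖v - w‖ * ‖z‖ * ‖v‖ + ‖w‖ * ‖z‖ * ‖v - w‖) := by gcongr
    _ = 4 * ‖v - w‖ * ‖z‖ := by rw [hv, hw]; ring

theorem reflection_singleton_add {v w : E} (h : ‖v‖ = ‖w‖) : (ℝ ∙ (v + w)).reflection v = w := by
  have hneg := Submodule.reflection_sub (F := E) (v := v) (w := -w) (by rwa [norm_neg])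
  rw [sub_neg_eq_add, Submodule.reflection_orthogonal_apply] at hneg
  exact neg_injective hneg

theorem exists_linearIsometryEquiv_apply_eq {x y : E} (hx : ‖x‖ = 1) (hy : ‖y‖ = 1) :
    ∃ e : E ≃ₗᵢ[ℝ] E, e x = y ∧ ∀ z, ‖e z - z‖ ≤ 4 * ‖x - y‖ * ‖z‖ := by
  rcases le_total 1 ‖x - y‖ with hfar | hnear
  · refine ⟨(ℝ ∙ (x - y))ᗮ.reflection, Submodule.reflection_sub (hx.trans hy.symm), fun z => ?_⟩
    calc ‖(ℝ ∙ (x - y))ᗮ.reflection z - z‖ ≤ ‖z‖ + ‖z‖ := by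
          simpa using norm_sub_le ((ℝ ∙ (x - y))ᗮ.reflection z) z
      _ ≤ 4 * ‖x - y‖ * ‖z‖ := by nlinarith [norm_nonneg z]
  · have h2x : ‖(2 : ℝ) • x‖ = 2 := by rw [norm_smul, hx, mul_one, Real.norm_ofNat]
    have hdiff : x + y - (2 : ℝ) • x = -(x - y) := by module
    have hxy : 1 ≤ ‖x + y‖ := by
      have := norm_sub_norm_le ((2 : ℝ) • x) (x + y)
      rw [norm_sub_rev, hdiff, norm_neg] at this
      linarith
    have hmid : ‖normalize (x + y) - x‖ ≤ ‖x - y‖ := by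
      have := norm_normalize_sub_normalize_le one_pos hxy (b := (2 : ℝ) • x) (by linarith)
      rwa [normalize_smul_of_pos two_pos, normalize_eq_self_of_norm_eq_one hx, inv_one, one_mul,
        hdiff, norm_neg] at this
    have hunit : ‖normalize (x + y)‖ = 1 :=
      norm_normalize (norm_pos_iff.1 (one_pos.trans_le hxy))
    have hspan : (ℝ ∙ normalize (x + y)) = ℝ ∙ (x + y) :=
      Submodule.span_singleton_smul_eq (IsUnit.mk0 _ (by positivity)) _
    refine ⟨(ℝ ∙ x).reflection.trans (ℝ ∙ normalize (x + y)).reflection, ?_, fun z => ?_⟩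
    · rw [LinearIsometryEquiv.trans_apply, Submodule.reflection_mem_subspace_eq_self
        (Submodule.mem_span_singleton_self x)]
      simp only [hspan, reflection_singleton_add (hx.trans hy.symm)]
    · have hrot := norm_reflection_singleton_sub_le hunit hx ((ℝ ∙ x).reflection z)
      rw [Submodule.reflection_reflection, LinearIsometryEquiv.norm_map] at hrot
      refine hrot.trans ?_
      gcongr

end UnitSphere

section OrthogonalGroup

instance {A : Type*} [NormedRing A] [StarRing A] [CStarRing A] :
    IsIsometricSMul (unitary A)ᵐᵒᵖ (unitary A) :=
  ⟨fun g => Isometry.of_dist_eq fun h k => by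
    simp only [Subtype.dist_eq, dist_eq_norm, MulOpposite.smul_eq_mul_unop, Submonoid.coe_mul,
      ← sub_mul, CStarRing.norm_mul_coe_unitary]⟩

variable {E : Type*} [NormedAddCommGroup E] [InnerProductSpace ℝ E] [CompleteSpace E]

instance : ContinuousSMul (unitary (E →L[ℝ] E)) E :=
  ⟨continuous_subtype_val.fst'.clm_apply continuous_snd⟩

instance : IsIsometricSMul (unitary (E →L[ℝ] E)) E :=
  ⟨fun g => AddMonoidHomClass.isometry_of_norm (g : E →L[ℝ] E) (Unitary.norm_map g)⟩

instance : MulAction (unitary (E →L[ℝ] E)) (sphere (0 : E) 1) where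
  smul g x := ⟨g • (x : E),
    mem_sphere_zero_iff_norm.2 ((Unitary.norm_map g x).trans (norm_eq_of_mem_sphere x))⟩
  one_smul x := Subtype.ext (one_smul _ (x : E))
  mul_smul g h x := Subtype.ext (mul_smul g h (x : E))

instance : ContinuousSMul (unitary (E →L[ℝ] E)) (sphere (0 : E) 1) :=
  ⟨(continuous_fst.smul (continuous_subtype_val.comp continuous_snd)).subtype_mk _⟩

instance : IsIsometricSMul (unitary (E →L[ℝ] E)) (sphere (0 : E) 1) :=
  ⟨fun g => Isometry.of_dist_eq fun x y => dist_smul g (x : E) y⟩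

instance [FiniteDimensional ℝ E] : CompactSpace (unitary (E →L[ℝ] E)) := by
  have : ProperSpace (E →L[ℝ] E) := FiniteDimensional.proper ℝ _
  refine isCompact_iff_compactSpace.1 (isCompact_of_isClosed_isBounded isClosed_unitary ?_)
  refine (isBounded_closedBall (x := 0) (r := 1)).subset fun Q hQ => ?_
  rw [mem_closedBall_zero_iff]
  exact Q.opNorm_le_bound zero_le_one fun z => by rw [Unitary.norm_map ⟨Q, hQ⟩, one_mul]

theorem dist_linearIsometryEquiv_symm_one_le {e : E ≃ₗᵢ[ℝ] E} {C : ℝ} (hC : 0 ≤ C)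
    (h : ∀ z, ‖e z - z‖ ≤ C * ‖z‖) : dist (Unitary.linearIsometryEquiv.symm e) 1 ≤ C := by
  rw [Subtype.dist_eq, dist_eq_norm]
  exact ContinuousLinearMap.opNorm_le_bound _ hC h

theorem exists_unitary_smul_eq (x y : sphere (0 : E) 1) :
    ∃ Q : unitary (E →L[ℝ] E), Q • x = y ∧ dist Q 1 ≤ 4 * dist x y := by
  obtain ⟨e, hexy, he⟩ := exists_linearIsometryEquiv_apply_eq (norm_eq_of_mem_sphere x)
    (norm_eq_of_mem_sphere y)
  rw [Subtype.dist_eq, dist_eq_norm]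
  exact ⟨Unitary.linearIsometryEquiv.symm e, Subtype.ext hexy,
    dist_linearIsometryEquiv_symm_one_le (by positivity) he⟩

end OrthogonalGroup

section HausdorffMeasure

variable {E : Type*} [NormedAddCommGroup E] [InnerProductSpace ℝ E]

theorem one_le_norm_add_of_mem_orthogonal (e : sphere (0 : E) 1) (z : (ℝ ∙ (e : E))ᗮ) :
    1 ≤ ‖(e : E) + z‖ := by
  have hpyth := norm_add_sq_eq_norm_sq_add_norm_sq_of_inner_eq_zero (e : E) z
    (Submodule.mem_orthogonal_singleton_iff_inner_right.1 z.2)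
  rw [norm_eq_of_mem_sphere] at hpyth
  nlinarith [norm_nonneg ((e : E) + z), mul_self_nonneg ‖(z : E)‖]

/-- The inverse of the gnomonic projection: the affine hyperplane tangent to the sphere at `e`,
identified with `eᗮ`, is projected radially onto the open hemisphere centred at `e`. -/
def gnomonicInv (e : sphere (0 : E) 1) (z : (ℝ ∙ (e : E))ᗮ) : sphere (0 : E) 1 :=
  toUnitSphere ((e : E) + z)
    (norm_pos_iff.1 (one_pos.trans_le (one_le_norm_add_of_mem_orthogonal e z)))

theorem lipschitzWith_gnomonicInv (e : sphere (0 : E) 1) : LipschitzWith 1 (gnomonicInv e) :=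
  LipschitzWith.of_dist_le_mul fun z w => by
    simpa [gnomonicInv, Subtype.dist_eq z w] using dist_toUnitSphere_le one_pos
      (one_le_norm_add_of_mem_orthogonal e z) (one_le_norm_add_of_mem_orthogonal e w) _ _

theorem closedBall_subset_image_gnomonicInv (e : sphere (0 : E) 1) {r : ℝ} (hr : r ≤ 1) :
    closedBall e r ⊆ gnomonicInv e '' closedBall 0 (2 * r) := by
  intro y hy
  rw [mem_closedBall, Subtype.dist_eq, dist_eq_norm] at hy
  have hinner : 1 / 2 ≤ inner ℝ (e : E) y := by
    have hsq := norm_sub_sq_real (y : E) e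
    rw [norm_eq_of_mem_sphere, norm_eq_of_mem_sphere, real_inner_comm] at hsq
    nlinarith [norm_nonneg ((y : E) - e)]
  have hpos : 0 < inner ℝ (e : E) y := one_half_pos.trans_le hinner
  set c : ℝ := inner ℝ (e : E) y with hc
  have hproj : (ℝ ∙ (e : E))ᗮ.orthogonalProjectionOnto (y : E) =
      (ℝ ∙ (e : E))ᗮ.orthogonalProjectionOnto ((y : E) - e) := by
    rw [map_sub, Submodule.orthogonalProjectionOnto_orthogonalComplement_singleton_eq_zero,
      sub_zero]
  refine ⟨c⁻¹ • (ℝ ∙ (e : E))ᗮ.orthogonalProjectionOnto (y : E), ?_, ?_⟩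
  · rw [mem_closedBall_zero_iff, norm_smul, hproj, Real.norm_of_nonneg (by positivity)]
    have hc2 : c⁻¹ ≤ 2 := by simpa using inv_anti₀ one_half_pos hinner
    gcongr
    exact (Submodule.norm_orthogonalProjectionOnto_apply_le _ _).trans hy
  · have hray : (e : E) + (c⁻¹ • (ℝ ∙ (e : E))ᗮ.orthogonalProjectionOnto (y : E) :
        (ℝ ∙ (e : E))ᗮ) = c⁻¹ • (y : E) := by
      rw [Submodule.coe_smul, ← Submodule.starProjection_apply,
        Submodule.starProjection_orthogonal_val,
        Submodule.starProjection_unit_singleton ℝ (norm_eq_of_mem_sphere e), ← hc, smul_sub,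
        inv_smul_smul₀ hpos.ne', add_sub_cancel]
    simp only [gnomonicInv, hray]
    exact toUnitSphere_smul (inv_pos.2 hpos) y _

variable [MeasurableSpace E] [BorelSpace E]

theorem hausdorffMeasure_closedBall_le (e : sphere (0 : E) 1) {d r : ℝ} (hd : 0 ≤ d) (hr : r ≤ 1) :
    μH[d] (closedBall e r) ≤ μH[d] (closedBall (0 : (ℝ ∙ (e : E))ᗮ) (2 * r)) := by
  refine (measure_mono (closedBall_subset_image_gnomonicInv e hr)).trans ?_
  simpa using (lipschitzWith_gnomonicInv e).hausdorffMeasure_image_le hd (closedBall 0 (2 * r))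

variable [FiniteDimensional ℝ E] {n : ℕ}

theorem exists_hausdorffMeasure_closedBall_le (hE : Module.finrank ℝ E = n + 1) :
    ∃ C : ℝ≥0∞, C ≠ ∞ ∧ ∀ (x : sphere (0 : E) 1) (r : ℝ), 0 < r → r ≤ 1 →
      μH[(n : ℝ)] (closedBall x r) ≤ C * ENNReal.ofReal (r ^ (n : ℝ)) := by
  rcases isEmpty_or_nonempty (sphere (0 : E) 1) with h | ⟨⟨e⟩⟩
  · exact ⟨0, ENNReal.zero_ne_top, fun x => isEmptyElim x⟩
  have : Fact (Module.finrank ℝ E = n + 1) := ⟨hE⟩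
  have hfr : Module.finrank ℝ (ℝ ∙ (e : E))ᗮ = n :=
    Submodule.finrank_orthogonal_span_singleton (ne_zero_of_mem_unit_sphere e)
  have haar : (μH[(n : ℝ)] : Measure (ℝ ∙ (e : E))ᗮ).IsAddHaarMeasure := by
    rw [← hfr]
    infer_instance
  refine ⟨μH[(n : ℝ)] (closedBall (0 : (ℝ ∙ (e : E))ᗮ) 2), measure_closedBall_lt_top.ne,
    fun x r hr hr1 => ?_⟩
  obtain ⟨Q, rfl, -⟩ := exists_unitary_smul_eq e x
  calc μH[(n : ℝ)] (closedBall (Q • e) r) = μH[(n : ℝ)] (closedBall e r) := by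
        rw [← Metric.smul_closedBall, measure_smul]
    _ ≤ μH[(n : ℝ)] (closedBall (0 : (ℝ ∙ (e : E))ᗮ) (r * 2)) := by
        rw [mul_comm]
        exact hausdorffMeasure_closedBall_le e n.cast_nonneg hr1
    _ = μH[(n : ℝ)] (closedBall (0 : (ℝ ∙ (e : E))ᗮ) 2) * ENNReal.ofReal (r ^ (n : ℝ)) := by
        rw [Measure.addHaar_closedBall_mul _ _ hr.le zero_le_two, hfr, mul_comm,
          Real.rpow_natCast]

theorem isFiniteMeasure_hausdorffMeasure_sphere (hE : Module.finrank ℝ E = n + 1) :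
    IsFiniteMeasure (μH[(n : ℝ)] : Measure (sphere (0 : E) 1)) := by
  obtain ⟨C, hC, hball⟩ := exists_hausdorffMeasure_closedBall_le hE
  refine ⟨isCompact_univ.measure_lt_top_of_nhdsWithin fun x _ => ⟨closedBall x 1,
    mem_nhdsWithin_of_mem_nhds (closedBall_mem_nhds x one_pos), ?_⟩⟩
  refine (hball x 1 one_pos le_rfl).trans_lt ?_
  simpa [lt_top_iff_ne_top] using hC

end HausdorffMeasure

section Homotopy

theorem Homotopic.trans {X Y : Type*} [TopologicalSpace X] [TopologicalSpace Y] {f g h : X → Y}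
    (hfg : Homotopic f g) (hgh : Homotopic g h) : Homotopic f h := by
  obtain ⟨H, hH, hH0, hH1⟩ := hfg
  obtain ⟨K, hK, hK0, hK1⟩ := hgh
  have hf : Continuous f := by
    simpa only [Function.comp_def, hH0] using hH.comp (Continuous.prodMk_right 0)
  have hg : Continuous g := by
    simpa only [Function.comp_def, hH1] using hH.comp (Continuous.prodMk_right 1)
  have hh : Continuous h := by
    simpa only [Function.comp_def, hK1] using hK.comp (Continuous.prodMk_right 1)
  let A : ContinuousMap.Homotopy (⟨f, hf⟩ : C(X, Y)) ⟨g, hg⟩ := ⟨⟨H, hH⟩, hH0, hH1⟩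
  let B : ContinuousMap.Homotopy (⟨g, hg⟩ : C(X, Y)) ⟨h, hh⟩ := ⟨⟨K, hK⟩, hK0, hK1⟩
  exact ⟨A.trans B, (A.trans B).continuous, (A.trans B).apply_zero, (A.trans B).apply_one⟩

variable {X F : Type*} [NormedAddCommGroup F] [InnerProductSpace ℝ F]

theorem homotopic_toUnitSphere [TopologicalSpace X] {u : X → F} {v : X → sphere (0 : F) 1}
    (hu : Continuous u) (hv : Continuous v) (hu0 : ∀ x, u x ≠ 0) (huv : ∀ x, ‖u x - v x‖ < 1) :
    Homotopic (fun x => toUnitSphere (u x) (hu0 x)) v := by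
  have hne : ∀ z : unitInterval × X, AffineMap.lineMap (u z.2) (v z.2 : F) (z.1 : ℝ) ≠ 0 := by
    intro z h0
    have hdist := dist_lineMap_right (u z.2) (v z.2 : F) (z.1 : ℝ)
    rw [h0, dist_zero_left, norm_eq_of_mem_sphere, Real.norm_of_nonneg (sub_nonneg.2 z.1.2.2),
      dist_eq_norm] at hdist
    nlinarith [huv z.2, z.1.2.1, norm_nonneg (u z.2 - v z.2)]
  refine ⟨fun z => toUnitSphere _ (hne z), continuous_toUnitSphere ?_ hne, fun x => ?_, fun x => ?_⟩
  · simp only [AffineMap.lineMap_apply_module]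
    fun_prop
  · simp [toUnitSphere]
  · simp [toUnitSphere, normalize_eq_self_of_norm_eq_one]

theorem exists_lipschitzWith_homotopic (G : Type*) [Group G] [PseudoMetricSpace G]
    [IsTopologicalGroup G] [CompactSpace G] [IsIsometricSMul Gᵐᵒᵖ G] [PseudoMetricSpace X]
    [CompactSpace X] [MeasurableSpace X] [BorelSpace X] [SecondCountableTopology X]
    [MulAction G X] [ContinuousSMul G X] [IsIsometricSMul G X] {μ : Measure X} [SFinite μ]
    [SMulInvariantMeasure G X μ] [CompleteSpace F] {C : ℝ≥0}
    (hG : ∀ x y : X, ∃ g : G, g • x = y ∧ dist g 1 ≤ C * dist x y)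
    {v : X → sphere (0 : F) 1} (hv : Continuous v) {p : ℝ} (hp : 1 ≤ p) (a : ℝ) {κ : ℝ≥0}
    (hκ : 1 < κ) :
    ∃ (w : X → sphere (0 : F) 1) (K : ℝ≥0), LipschitzWith K w ∧ Homotopic w v ∧
      gagliardoEnergy μ p a w ≤ κ * gagliardoEnergy μ p a v := by
  have hp0 : 0 < p := one_pos.trans_le hp
  set c : ℝ≥0 := κ ^ p⁻¹ with hc
  have hc1 : 1 < c := NNReal.one_lt_rpow hκ (inv_pos.2 hp0)
  have hc0 : 0 < (c⁻¹ : ℝ) := inv_pos.2 (by exact_mod_cast zero_lt_one.trans hc1)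
  have hc_inv : (c⁻¹ : ℝ) < 1 := inv_lt_one_of_one_lt₀ hc1
  obtain ⟨u, K, huK, huv, hE⟩ := exists_lipschitzWith_approx (μ := μ) G hG
    (continuous_subtype_val.comp hv) (sub_pos.2 hc_inv)
  have hu_norm : ∀ x, (c⁻¹ : ℝ) ≤ ‖u x‖ := fun x => by
    have := norm_sub_norm_le (v x : F) (u x)
    rw [norm_eq_of_mem_sphere, norm_sub_rev] at this
    linarith [this.trans (huv x)]
  have hu0 : ∀ x, u x ≠ 0 := fun x => norm_pos_iff.1 (hc0.trans_le (hu_norm x))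
  let w : X → sphere (0 : F) 1 := fun x => toUnitSphere (u x) (hu0 x)
  have hw : ∀ x y, edist (w x) (w y) ≤ c * edist (u x) (u y) := fun x y => by
    have := dist_toUnitSphere_le hc0 (hu_norm x) (hu_norm y) (hu0 x) (hu0 y)
    rw [inv_inv] at this
    simp only [edist_nndist]
    exact_mod_cast this
  refine ⟨w, c * K, fun x y => ?_, homotopic_toUnitSphere huK.continuous hv hu0 fun x =>
    (huv x).trans_lt (sub_lt_self 1 hc0), ?_⟩
  · rw [ENNReal.coe_mul, mul_assoc]
    exact (hw x y).trans (by gcongr; exact huK x y)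
  · have hcκ : (c : ℝ≥0∞) ^ p = κ := by
      rw [← ENNReal.coe_rpow_of_nonneg _ hp0.le, hc, NNReal.rpow_inv_rpow hp0.ne']
    rw [← hcκ]
    exact (gagliardoEnergy_le_of_edist_le hp0.le hw).trans (by gcongr; exact hE p a hp)

end Homotopy

section Sphere

variable {E F : Type*} [NormedAddCommGroup E] [InnerProductSpace ℝ E] [FiniteDimensional ℝ E]
  [MeasurableSpace E] [BorelSpace E] [NormedAddCommGroup F] [InnerProductSpace ℝ F]
  [CompleteSpace F]

theorem exists_homotopic_gagliardoEnergy_le {n : ℕ} (hE : Module.finrank ℝ E = n + 1)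
    (hn : 0 < n) {g v : sphere (0 : E) 1 → sphere (0 : F) 1} (hv : Continuous v)
    (hvg : Homotopic v g) {p : ℝ} (hp : 1 ≤ p) (a : ℝ) {b : ℝ} (hb : b < n + p) {κ : ℝ≥0}
    (hκ : 1 < κ) :
    ∃ w, (Continuous w ∧ Homotopic w g) ∧
      gagliardoEnergy μH[(n : ℝ)] p a w ≤ κ * gagliardoEnergy μH[(n : ℝ)] p a v ∧
        gagliardoEnergy μH[(n : ℝ)] p b w ≠ ∞ := by
  have := isFiniteMeasure_hausdorffMeasure_sphere hE
  obtain ⟨C, hC, hball⟩ := exists_hausdorffMeasure_closedBall_le hE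
  obtain ⟨w, K, hwK, hwv, hle⟩ := exists_lipschitzWith_homotopic (G := unitary (E →L[ℝ] E))
    (C := 4) (μ := μH[(n : ℝ)]) exists_unitary_smul_eq hv hp a hκ
  exact ⟨w, ⟨hwK.continuous, hwv.trans hvg⟩, hle, gagliardoEnergy_ne_top_of_lipschitzWith hwK
    (one_pos.trans_le hp) (by positivity) hb hC hball⟩

theorem stmt19_general {n : ℕ} (hE : Module.finrank ℝ E = n + 1) (hn : 0 < n) {p s : ℝ}
    (hp : 1 ≤ p) (hs : s < 1) (g : sphere (0 : E) 1 → sphere (0 : F) 1) :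
    Tendsto (fun t => ⨅ v ∈ {v | Continuous v ∧ Homotopic v g},
        gagliardoEnergy μH[(n : ℝ)] p (n + t * p) v) (𝓝[>] s)
      (𝓝 (⨅ v ∈ {v | Continuous v ∧ Homotopic v g},
        gagliardoEnergy μH[(n : ℝ)] p (n + s * p) v)) := by
  have hp0 : 0 < p := one_pos.trans_le hp
  obtain ⟨r, hsr, hr1⟩ := exists_between hs
  have hrs : n + s * p < n + r * p := by gcongr
  have hrp : n + r * p < n + p := by
    gcongr
    exact mul_lt_of_lt_one_left hp0 hr1
  have hexp : Tendsto (fun t => n + t * p) (𝓝[>] s) (𝓝[>] (n + s * p)) :=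
    tendsto_nhdsWithin_of_tendsto_nhds_of_eventually_within _
      ((Continuous.tendsto (by fun_prop) s).mono_left nhdsWithin_le_nhds)
      (eventually_mem_nhdsWithin.mono fun t (ht : s < t) =>
        add_lt_add_right (mul_lt_mul_of_pos_right ht hp0) _)
  have := isFiniteMeasure_hausdorffMeasure_sphere hE
  exact (tendsto_iInf_gagliardoEnergy hp0 (fun v hv => hv.1) hrs fun v hv κ hκ =>
    exists_homotopic_gagliardoEnergy_le hE hn hv.1 hv.2 hp _ hrp hκ).comp hexp

instance (n : ℕ) : IsFiniteMeasure (μH[(n : ℝ)] : Measure (Sph n)) :=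
  isFiniteMeasure_hausdorffMeasure_sphere (by simp)

variable {n m : ℕ} {s t : ℝ}

theorem sphEnergy_eq_gagliardoEnergy (hp : 0 < n / s) {v : Sph n → Sph m} (hv : Continuous v) :
    sphEnergy n m s t v = gagliardoEnergy μH[(n : ℝ)] (n / s) (n + t * (n / s)) v := by
  rw [gagliardoEnergy, lintegral_prod _ (measurable_edist_rpow_div hv _ _).aemeasurable]
  refine lintegral_congr fun x => lintegral_congr fun y => ?_
  rw [← dist_eq_norm, ← Subtype.dist_eq]
  rcases eq_or_ne x y with rfl | hxy
  · simp [Real.zero_rpow hp.ne', hp]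
  · have hpos : 0 < dist x y := dist_pos.2 hxy
    rw [ENNReal.ofReal_div_of_pos (by positivity), ← ENNReal.ofReal_rpow_of_pos hpos,
      ← ENNReal.ofReal_rpow_of_nonneg dist_nonneg hp.le, edist_dist, edist_dist]

theorem minEnergy_eq_iInf (hp : 0 < n / s) (g : Sph n → Sph m) (t : ℝ) :
    minEnergy n m s g t = ⨅ v ∈ {v | Continuous v ∧ Homotopic v g},
      gagliardoEnergy μH[(n : ℝ)] (n / s) (n + t * (n / s)) v := by
  refine le_antisymm (le_iInf₂ fun v hv => sInf_le ⟨v, hv.1, hv.2, ?_⟩) (le_sInf ?_)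
  · exact (sphEnergy_eq_gagliardoEnergy hp hv.1).symm
  · rintro _ ⟨v, hv, hvg, rfl⟩
    exact (iInf₂_le v ⟨hv, hvg⟩).trans_eq (sphEnergy_eq_gagliardoEnergy hp hv).symm

end Sphere

/-- the infimum of the energy in a homotopy class is continuous from the right
at `t = s`, i.e. `m_s = lim_{t→s⁺} m_t`. -/
theorem stmt19 (n m : ℕ) (hn : 1 ≤ n) (hm : 1 ≤ m) (s : ℝ) (hs : 0 < s) (hs1 : s < 1)
    (g : Sph n → Sph m) (hg : Continuous g) :
    Filter.Tendsto (fun t => minEnergy n m s g t) (𝓝[>] s) (𝓝 (minEnergy n m s g s)) := by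
  have hp : 1 ≤ n / s := by
    rw [one_le_div hs]
    exact hs1.le.trans (by exact_mod_cast hn)
  simp only [minEnergy_eq_iInf (one_pos.trans_le hp)]
  exact stmt19_general finrank_euclideanSpace_fin hn hp hs1 g
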